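/- arXiv:1904.01800 — 2 statements merged into one kernel-verified Lean document; each statement's English description precedes it below -/
import Mathlib

section
/- Let M be a simple matroid of rank r ≥ 3 on the ground set {1,…,N}, with basis generating polynomial F_M. Assume that for every basis B of M, F_M is strictly homogeneous log-concave at every point of the cone C^N_{B>0} = { z ∈ ℝ^N_{≥0} : z_i > 0 for all i ∈ B }. Then for any elements j_1,…,j_k of the ground set such that the deletion M_0 = M ∖ {j_1,…,j_k} still has rank r, and for every basis B_0 of M_0, the basis generating polynomial F_{M_0} (a polynomial in the remaining N−k variables) is strictly homogeneous log-concave at every point of C^{N−k}_{B_0>0} = { z ∈ ℝ^{N−k}_{≥0} : z_i > 0 for all i ∈ B_0 }. -/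
/-!
Deleting elements restricts a polynomial to a coordinate subspace, so evaluation, gradient and
Hessian of the restriction at `z` are obtained from those of the original polynomial at the
extension of `z` by zero, by keeping only the remaining coordinates. The matrix testing strict
homogeneous log-concavity of the restriction is therefore a principal submatrix of the original
one, and extension by zero maps the cone of a basis `B` of the deletion into the cone of `B`.
-/

open MvPolynomial

/-- A matroid on a finite ground set `E`, given by its nonempty collection of bases satisfying
the basis exchange axiom. -/
structure FinMatroid (E : Type) [Fintype E] [DecidableEq E] where
  bases : Finset (Finset E)
  bases_nonempty : bases.Nonempty
  exchange : ∀ B₁ ∈ bases, ∀ B₂ ∈ bases, ∀ x ∈ B₁ \ B₂,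
    ∃ y ∈ B₂ \ B₁, insert y (B₁.erase x) ∈ bases

/-- The basis generating polynomial of a matroid. -/
noncomputable def basisGen {E : Type} [Fintype E] [DecidableEq E] (M : FinMatroid E) :
    MvPolynomial E ℝ :=
  ∑ B ∈ M.bases, ∏ i ∈ B, X i

section KillCompl

variable {R σ τ : Type*} [CommSemiring R] {f : σ → τ} (hf : Function.Injective f)

theorem eval_killCompl (z : σ → R) (p : MvPolynomial τ R) :
    eval z (killCompl hf p) = eval (Function.extend f z 0) p := by
  have h : (aeval z).comp (killCompl hf) = aeval (R := R) (Function.extend f z 0) := by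
    ext j
    by_cases hj : j ∈ Set.range f
    · obtain ⟨i, rfl⟩ := hj
      simp [killCompl, hf.extend_apply]
    · simp [killCompl, hj, Function.extend_apply' _ _ _ hj]
  simpa only [AlgHom.comp_apply, aeval_eq_eval] using DFunLike.congr_fun h p

theorem pderiv_killCompl (i : σ) (p : MvPolynomial τ R) :
    pderiv i (killCompl hf p) = killCompl hf (pderiv (f i) p) := by
  ext m
  simp only [coeff_pderiv, coeff_killCompl, Finsupp.mapDomain_add, Finsupp.mapDomain_single,
    Finsupp.mapDomain_apply hf]

theorem rename_killCompl [DecidablePred (· ∈ Set.range f)] (p : MvPolynomial τ R) :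
    rename f (killCompl hf p) = aeval (fun j => if j ∈ Set.range f then X j else 0) p := by
  have h : (rename f).comp (killCompl hf) =
      aeval (R := R) fun j => if j ∈ Set.range f then X j else 0 := by
    ext1 j
    by_cases hj : j ∈ Set.range f
    · obtain ⟨i, rfl⟩ := hj
      simp [killCompl]
    · simp [killCompl, hj]
  exact DFunLike.congr_fun h p

end KillCompl

section LogConcavityMatrix

variable {R σ τ : Type*} [CommRing R]

/-- The matrix `-G · H_G + s · (∇G)ᵀ(∇G)` at the point `a`, whose positive definiteness expresses
homogeneous log-concavity of `G` at `a`. -/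
noncomputable def logConcavityMatrix (G : MvPolynomial σ R) (s : R) (a : σ → R) : Matrix σ σ R :=
  Matrix.of fun i j =>
    -(eval a G) * eval a (pderiv i (pderiv j G)) + s * (eval a (pderiv i G) * eval a (pderiv j G))

theorem logConcavityMatrix_killCompl {f : σ → τ} (hf : Function.Injective f)
    (G : MvPolynomial τ R) (s : R) (z : σ → R) :
    logConcavityMatrix (killCompl hf G) s z =
      (logConcavityMatrix G s (Function.extend f z 0)).submatrix f f := by
  ext i j
  simp only [logConcavityMatrix, Matrix.submatrix_apply, Matrix.of_apply, pderiv_killCompl,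
    eval_killCompl]

theorem logConcavityMatrix_rename {f : σ → τ} (hf : Function.Injective f)
    (G : MvPolynomial σ R) (s : R) (a : τ → R) :
    (logConcavityMatrix (rename f G) s a).submatrix f f = logConcavityMatrix G s (a ∘ f) := by
  ext i j
  simp only [logConcavityMatrix, Matrix.submatrix_apply, Matrix.of_apply, pderiv_rename hf,
    eval_rename]

end LogConcavityMatrix

section PosCone

variable {R σ τ : Type*} [Zero R] [Preorder R]

/-- The cone `C_{B>0}` of nonnegative vectors that are positive on `B`. -/
def posCone (B : Set σ) : Set (σ → R) :=
  {a | (∀ i, 0 ≤ a i) ∧ ∀ i ∈ B, 0 < a i}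

theorem extend_zero_mem_posCone {f : σ → τ} (hf : Function.Injective f) {B : Set τ}
    (hB : B ⊆ Set.range f) {z : σ → R} (hz : z ∈ posCone (f ⁻¹' B)) :
    Function.extend f z 0 ∈ posCone B := by
  refine ⟨fun j => ?_, fun j hj => ?_⟩
  · by_cases hj : j ∈ Set.range f
    · obtain ⟨i, rfl⟩ := hj
      simpa only [hf.extend_apply] using hz.1 i
    · rw [Function.extend_apply' _ _ _ hj, Pi.zero_apply]
  · obtain ⟨i, rfl⟩ := hB hj
    simpa only [hf.extend_apply] using hz.2 i hj

end PosCone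

section LogConcave

variable {σ τ : Type*}

/-- Strict homogeneous log-concavity of `G` at `a`. The number `r` stands for the degree of `G`; at
`r = 0`, where division gives `0`, the condition is imposed for all `s > 0`. -/
def IsStrictlyHomogLogConcaveAt (G : MvPolynomial σ ℝ) (r : ℕ) (a : σ → ℝ) : Prop :=
  ∀ s : ℝ, ((r : ℝ) - 1) / (r : ℝ) < s → (logConcavityMatrix G s a).PosDef

theorem IsStrictlyHomogLogConcaveAt.killCompl {G : MvPolynomial τ ℝ} {r : ℕ} {f : σ → τ}
    (hf : Function.Injective f) {z : σ → ℝ}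
    (hG : IsStrictlyHomogLogConcaveAt G r (Function.extend f z 0)) :
    IsStrictlyHomogLogConcaveAt (killCompl hf G) r z := fun s hs => by
  rw [logConcavityMatrix_killCompl]
  exact (hG s hs).submatrix hf

/-- `f` is the inclusion of the remaining elements, so that `killCompl hf G` is the polynomial of
the deletion, in the remaining variables only. -/
theorem deletion_strictly_homog_logConcave_general {f : σ → τ} (hf : Function.Injective f)
    {B : Set τ} (hB : B ⊆ Set.range f) {G : MvPolynomial τ ℝ} {r : ℕ}
    (hG : ∀ a ∈ posCone B, IsStrictlyHomogLogConcaveAt G r a) :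
    ∀ z ∈ posCone (f ⁻¹' B), IsStrictlyHomogLogConcaveAt (killCompl hf G) r z :=
  fun _ hz => (hG _ (extend_zero_mem_posCone hf hB hz)).killCompl hf

end LogConcave

/-- let `M` be a simple matroid of rank `r ≥ 3` on `{1,…,N}` whose basis
generating polynomial is strictly homogeneous log-concave on the cone `C^N_{B>0}` for every
basis `B`.  Then for every deletion `M₀ = M ∖ S` of full rank `r` (i.e. some basis avoids `S`)
and every basis `B₀` of `M₀`, the basis generating polynomial of `M₀` (the restriction
`F_M|_{x_j = 0, j ∈ S}`, as a polynomial in the remaining `N - |S|` variables) is strictly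
homogeneous log-concave at every point of `C^{N-|S|}_{B₀>0}`. -/
theorem deletion_strictly_homog_logConcave (N r : ℕ) (hr : 3 ≤ r)
    (M : FinMatroid (Fin N))
    (hrank : ∀ B ∈ M.bases, B.card = r)
    (hsimple : ∀ e f : Fin N, ∃ B ∈ M.bases, e ∈ B ∧ f ∈ B)
    (hconc : ∀ B ∈ M.bases, ∀ a : Fin N → ℝ, (∀ i, 0 ≤ a i) → (∀ i ∈ B, 0 < a i) →
      ∀ s : ℝ, ((r : ℝ) - 1) / (r : ℝ) < s →
        (Matrix.of fun i j : Fin N =>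
          -(eval a (basisGen M)) * eval a (pderiv i (pderiv j (basisGen M)))
            + s * (eval a (pderiv i (basisGen M)) * eval a (pderiv j (basisGen M)))).PosDef)
    (S : Finset (Fin N)) (hS : ∃ B ∈ M.bases, Disjoint B S)
    (F₀ : MvPolynomial (Fin N) ℝ)
    (hF₀ : F₀ = (aeval fun i : Fin N =>
      if i ∈ S then (0 : MvPolynomial (Fin N) ℝ) else X i) (basisGen M))
    (B₀ : Finset (Fin N)) (hB₀ : B₀ ∈ M.bases) (hB₀S : Disjoint B₀ S) :
    ∀ z : {i : Fin N // i ∉ S} → ℝ,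
      (∀ i, 0 ≤ z i) → (∀ i : {i : Fin N // i ∉ S}, i.1 ∈ B₀ → 0 < z i) →
      ∀ s : ℝ, ((r : ℝ) - 1) / (r : ℝ) < s →
        (Matrix.of fun i j : {i : Fin N // i ∉ S} =>
          -(eval (fun i : Fin N => if h : i ∈ S then 0 else z ⟨i, h⟩) F₀)
              * eval (fun i : Fin N => if h : i ∈ S then 0 else z ⟨i, h⟩)
                  (pderiv i.1 (pderiv j.1 F₀))
            + s * (eval (fun i : Fin N => if h : i ∈ S then 0 else z ⟨i, h⟩) (pderiv i.1 F₀)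
                * eval (fun i : Fin N => if h : i ∈ S then 0 else z ⟨i, h⟩)
                    (pderiv j.1 F₀))).PosDef := by
  intro z hz hzpos s hs
  have hval : Function.Injective (Subtype.val : {i : Fin N // i ∉ S} → Fin N) :=
    Subtype.val_injective
  have hB₀range : (B₀ : Set (Fin N)) ⊆ Set.range (Subtype.val : {i : Fin N // i ∉ S} → Fin N) :=
    fun i hi => ⟨⟨i, Finset.disjoint_left.mp hB₀S hi⟩, rfl⟩
  have hF₀rename : F₀ = rename Subtype.val (killCompl hval (basisGen M)) := by
    classical
    simp [hF₀, rename_killCompl]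
  have hz₀ : (fun i : Fin N => if h : i ∈ S then 0 else z ⟨i, h⟩) ∘ Subtype.val = z := by
    ext i
    simp [i.2]
  change ((logConcavityMatrix F₀ s _).submatrix Subtype.val Subtype.val).PosDef
  rw [hF₀rename, logConcavityMatrix_rename hval, hz₀]
  exact deletion_strictly_homog_logConcave_general hval hB₀range
    (fun a ha => hconc B₀ hB₀ a ha.1 ha.2) z ⟨hz, hzpos⟩ s hs
end

section
/- Let F ∈ ℝ[x_1,…,x_n] be a homogeneous polynomial of degree r ≥ 3 and let a ∈ ℝ^n. Set ∂_aF = Σ_{i=1}^n a_i·∂F/∂x_i, a homogeneous polynomial of degree r−1. Then the following are equivalent: (i) for every real s ≥ (r−1)/r (respectively s > (r−1)/r), the matrix (−F·H_F + s·(∇F)ᵀ(∇F)) evaluated at a is positive semidefinite (respectively positive definite); (ii) for every real s' ≥ (r−2)/(r−1) (respectively s' > (r−2)/(r−1)), the matrix (−(∂_aF)·H_{∂_aF} + s'·(∇∂_aF)ᵀ(∇∂_aF)) evaluated at a is positive semidefinite (respectively positive definite). That is, F is (strictly) homogeneous log-concave at a if and only if ∂_aF is (strictly) homogeneous log-concave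 at a. -/
/-!
By Euler's identity applied to `F` and to its first and second partial derivatives,
`∂_a F`, `∇ ∂_a F` and `H_{∂_a F}` evaluated at `a` are `r`, `r - 1` and `r - 2` times
`F`, `∇ F` and `H_F` evaluated at `a`. Hence the matrix of `∂_a F` with parameter
`s' = r (r - 2) t` is the positive multiple `r (r - 2)` of the matrix of `F` with parameter
`s = (r - 1)² t`, and the thresholds `s = (r - 1) / r` and `s' = (r - 2) / (r - 1)` both correspond
to `t = 1 / (r (r - 1))`.
-/

open MvPolynomial

section CommSemiring

variable {σ R : Type*} [CommSemiring R]

theorem pderiv_pderiv_comm (i j : σ) (G : MvPolynomial σ R) :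
    pderiv i (pderiv j G) = pderiv j (pderiv i G) := by
  ext m
  obtain rfl | hij := eq_or_ne i j
  · rfl
  · simp only [coeff_pderiv, add_right_comm m, Finsupp.add_apply,
      Finsupp.single_eq_of_ne hij, Finsupp.single_eq_of_ne hij.symm, add_zero, mul_right_comm]

variable [Fintype σ]

/-- The directional derivative `∂_a G = ∑ i, a i * ∂G/∂x_i` of a polynomial, again as a
polynomial; the direction `a` is constant. -/
noncomputable def dirDeriv (a : σ → R) (G : MvPolynomial σ R) : MvPolynomial σ R :=
  ∑ i, a i • pderiv i G

theorem pderiv_dirDeriv (i : σ) (a : σ → R) (G : MvPolynomial σ R) :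
    pderiv i (dirDeriv a G) = dirDeriv a (pderiv i G) := by
  simp only [dirDeriv, map_sum, Derivation.map_smul, pderiv_pderiv_comm i]

theorem eval_dirDeriv_self {d : ℕ} {G : MvPolynomial σ R} (hG : G.IsHomogeneous d) (a : σ → R) :
    eval a (dirDeriv a G) = d * eval a G := by
  simpa [dirDeriv] using congrArg (eval a) hG.sum_X_mul_pderiv

end CommSemiring

section CommRing

variable {σ R : Type*} [CommRing R]

/-- The matrix `-G H_G + s (∇G)ᵀ(∇G)` evaluated at `a`, whose positivity expresses
log-concavity of `G` at `a`. -/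
noncomputable def logConcaveMatrix (G : MvPolynomial σ R) (a : σ → R) (s : R) : Matrix σ σ R :=
  Matrix.of fun i j =>
    -(eval a G) * eval a (pderiv i (pderiv j G))
      + s * (eval a (pderiv i G) * eval a (pderiv j G))

theorem logConcaveMatrix_dirDeriv [Fintype σ] {d : ℕ} {F : MvPolynomial σ R}
    (hF : F.IsHomogeneous (d + 2)) (a : σ → R) (t : R) :
    logConcaveMatrix (dirDeriv a F) a ((d + 2) * d * t) =
      ((d + 2) * d : R) • logConcaveMatrix F a ((d + 1) ^ 2 * t) := by
  have eval_grad (i : σ) :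
      eval a (pderiv i (dirDeriv a F)) = (d + 1) * eval a (pderiv i F) := by
    simpa [pderiv_dirDeriv] using eval_dirDeriv_self (hF.pderiv (i := i)) a
  have eval_hessian (i j : σ) :
      eval a (pderiv i (pderiv j (dirDeriv a F))) = d * eval a (pderiv i (pderiv j F)) := by
    simpa [pderiv_dirDeriv] using eval_dirDeriv_self (hF.pderiv (i := j)).pderiv a
  ext i j
  simp only [logConcaveMatrix, Matrix.of_apply, Matrix.smul_apply, smul_eq_mul,
    eval_dirDeriv_self hF, eval_grad, eval_hessian]
  push_cast
  ring

end CommRing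

section Scaling

variable {σ K A : Type*} [Field K] [LinearOrder K] [StarRing K] [StarOrderedRing K]
  [Ring A] [PartialOrder A] [StarRing A] [Algebra K A] [StarModule K A]

theorem posSemidef_smul_iff [PosSMulMono K A] {c : K} (hc : 0 < c) {M : Matrix σ σ A} :
    (c • M).PosSemidef ↔ M.PosSemidef :=
  ⟨fun h => by simpa only [inv_smul_smul₀ hc.ne'] using h.smul (inv_pos.2 hc).le,
    fun h => h.smul hc.le⟩

theorem posDef_smul_iff [PosSMulStrictMono K A] {c : K} (hc : 0 < c) {M : Matrix σ σ A} :
    (c • M).PosDef ↔ M.PosDef :=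
  ⟨fun h => by simpa only [inv_smul_smul₀ hc.ne'] using h.smul (inv_pos.2 hc),
    fun h => h.smul hc⟩

end Scaling

section LogConcave

variable {σ K : Type*} [Field K] [LinearOrder K] [StarRing K]

/-- Homogeneous log-concavity at `a` of a polynomial `G` that is homogeneous of degree `d`. The
degree is an explicit argument, since `G = 0` does not determine it. -/
def HomogLogConcaveAt (d : ℕ) (G : MvPolynomial σ K) (a : σ → K) : Prop :=
  ∀ s : K, ((d : K) - 1) / d ≤ s → (logConcaveMatrix G a s).PosSemidef

/-- Strict homogeneous log-concavity at `a` of a polynomial `G` that is homogeneous of degree `d`;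
the degree is explicit as in `HomogLogConcaveAt`. -/
def StrictHomogLogConcaveAt (d : ℕ) (G : MvPolynomial σ K) (a : σ → K) : Prop :=
  ∀ s : K, ((d : K) - 1) / d < s → (logConcaveMatrix G a s).PosDef

theorem homogLogConcaveAt_iff_forall_mul [PosMulReflectLT K] {d : ℕ}
    {G : MvPolynomial σ K} {a : σ → K} {c t₀ : K} (hc : 0 < c) (ht₀ : c * t₀ = ((d : K) - 1) / d) :
    HomogLogConcaveAt d G a ↔ ∀ t, t₀ ≤ t → (logConcaveMatrix G a (c * t)).PosSemidef :=
  ((OrderIso.mulLeft₀ c hc).toEquiv.forall_congr fun _ =>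
    imp_congr_left <| by rw [← ht₀]; exact (OrderIso.mulLeft₀ c hc).le_iff_le.symm).symm

theorem strictHomogLogConcaveAt_iff_forall_mul [PosMulReflectLT K] {d : ℕ}
    {G : MvPolynomial σ K} {a : σ → K} {c t₀ : K} (hc : 0 < c) (ht₀ : c * t₀ = ((d : K) - 1) / d) :
    StrictHomogLogConcaveAt d G a ↔ ∀ t, t₀ < t → (logConcaveMatrix G a (c * t)).PosDef :=
  ((OrderIso.mulLeft₀ c hc).toEquiv.forall_congr fun _ =>
    imp_congr_left <| by rw [← ht₀]; exact (OrderIso.mulLeft₀ c hc).lt_iff_lt.symm).symm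

theorem homog_logConcave_iff_dirDeriv_general [StarOrderedRing K] [Fintype σ] {r : ℕ}
    (hr : 3 ≤ r) {F : MvPolynomial σ K} (hF : F.IsHomogeneous r) (a : σ → K) :
    (HomogLogConcaveAt r F a ↔ HomogLogConcaveAt (r - 1) (dirDeriv a F) a) ∧
      (StrictHomogLogConcaveAt r F a ↔ StrictHomogLogConcaveAt (r - 1) (dirDeriv a F) a) := by
  obtain ⟨d, rfl⟩ : ∃ d, r = d + 2 := Nat.exists_eq_add_of_le' (by lia)
  have hd : (0 : K) < d := Nat.cast_pos.2 (by lia)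
  have hc : (0 : K) < (d + 2) * d := by positivity
  have hc' : (0 : K) < (d + 1) ^ 2 := by positivity
  have threshold : ((d : K) + 1) ^ 2 * (1 / ((d + 2) * (d + 1))) =
      ((d + 2 : ℕ) - 1) / (d + 2 : ℕ) := by
    push_cast
    field_simp
    ring
  have threshold_dirDeriv : ((d : K) + 2) * d * (1 / ((d + 2) * (d + 1))) =
      ((d + 1 : ℕ) - 1) / (d + 1 : ℕ) := by
    push_cast
    field_simp
    ring
  constructor
  · rw [Nat.add_succ_sub_one, homogLogConcaveAt_iff_forall_mul hc' threshold,
      homogLogConcaveAt_iff_forall_mul hc threshold_dirDeriv]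
    simp only [logConcaveMatrix_dirDeriv hF, posSemidef_smul_iff hc]
  · rw [Nat.add_succ_sub_one, strictHomogLogConcaveAt_iff_forall_mul hc' threshold,
      strictHomogLogConcaveAt_iff_forall_mul hc threshold_dirDeriv]
    simp only [logConcaveMatrix_dirDeriv hF, posDef_smul_iff hc]

end LogConcave

/-- for a homogeneous polynomial `F` of degree `r ≥ 3` and a point `a`, `F` is
(strictly) homogeneous log-concave at `a` iff the directional derivative
`∂_a F = Σ a_i ∂F/∂x_i` (homogeneous of degree `r - 1`) is (strictly) homogeneous log-concave
at `a`: the positive semidefiniteness condition for all `s ≥ (r-1)/r` holds for `F` iff it holds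
for `∂_a F` for all `s' ≥ (r-2)/(r-1)`, and likewise with strict inequalities and positive
definiteness. -/
theorem homog_logConcave_iff_dirDeriv (n r : ℕ) (hr : 3 ≤ r)
    (F : MvPolynomial (Fin n) ℝ) (hhom : F.IsHomogeneous r)
    (a : Fin n → ℝ)
    (Fa : MvPolynomial (Fin n) ℝ) (hFa : Fa = ∑ i : Fin n, a i • pderiv i F) :
    ((∀ s : ℝ, ((r : ℝ) - 1) / (r : ℝ) ≤ s →
        (Matrix.of fun i j : Fin n =>
          -(eval a F) * eval a (pderiv i (pderiv j F))
            + s * (eval a (pderiv i F) * eval a (pderiv j F))).PosSemidef) ↔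
      (∀ s' : ℝ, ((r : ℝ) - 2) / ((r : ℝ) - 1) ≤ s' →
        (Matrix.of fun i j : Fin n =>
          -(eval a Fa) * eval a (pderiv i (pderiv j Fa))
            + s' * (eval a (pderiv i Fa) * eval a (pderiv j Fa))).PosSemidef)) ∧
    ((∀ s : ℝ, ((r : ℝ) - 1) / (r : ℝ) < s →
        (Matrix.of fun i j : Fin n =>
          -(eval a F) * eval a (pderiv i (pderiv j F))
            + s * (eval a (pderiv i F) * eval a (pderiv j F))).PosDef) ↔
      (∀ s' : ℝ, ((r : ℝ) - 2) / ((r : ℝ) - 1) < s' →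
        (Matrix.of fun i j : Fin n =>
          -(eval a Fa) * eval a (pderiv i (pderiv j Fa))
            + s' * (eval a (pderiv i Fa) * eval a (pderiv j Fa))).PosDef)) := by
  have cast_pred : ((r - 1 : ℕ) : ℝ) = r - 1 := Nat.cast_pred (by lia)
  have sub_one_sub_one : (r : ℝ) - 1 - 1 = r - 2 := by ring
  simpa only [HomogLogConcaveAt, StrictHomogLogConcaveAt, logConcaveMatrix, dirDeriv, ← hFa,
    cast_pred, sub_one_sub_one] using homog_logConcave_iff_dirDeriv_general hr hhom a
end
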